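/- Let μ ∈ (0,1]. The function h_μ(ξ) = (tanh(√μ |ξ|)/(√μ |ξ|))^{-1/2} (with h_μ(0) = 1) is smooth on ℝ, and for every n ∈ ℕ there is a constant C_n, independent of μ, such that |h_μ^{(n)}(ξ)| ≤ C_n μ^{n/2} ⟨√μ ξ⟩^{1/2 - n} for all ξ ∈ ℝ, where h_μ^{(n)} denotes the n-th derivative. -/

import Mathlib

noncomputable section

/-- The Japanese bracket `⟨x⟩ = (1 + x²)^{1/2}`. -/
def jap (x : ℝ) : ℝ := (1 + x ^ 2) ^ ((1 : ℝ) / 2)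

/-- The symbol `T_μ(ξ) = tanh(√μ |ξ|)/(√μ |ξ|)` for `ξ ≠ 0`, with value `1` at `ξ = 0`. -/
def Tsymb (μ ξ : ℝ) : ℝ :=
  if ξ = 0 then 1 else Real.tanh (Real.sqrt μ * |ξ|) / (Real.sqrt μ * |ξ|)

/-- `h_μ(ξ) = (tanh(√μ |ξ|)/(√μ |ξ|))^{-1/2}`, with `h_μ(0) = 1`. -/
def hsymb (μ ξ : ℝ) : ℝ := (Tsymb μ ξ) ^ (-(1 : ℝ) / 2)

open scoped ContDiff

lemma one_le_jap (x : ℝ) : 1 ≤ jap x := by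
  unfold jap
  exact Real.one_le_rpow (by nlinarith [sq_nonneg x]) (by norm_num)

lemma jap_pos (x : ℝ) : 0 < jap x := lt_of_lt_of_le one_pos (one_le_jap x)

lemma jap_eq_sqrt (x : ℝ) : jap x = Real.sqrt (1 + x ^ 2) := by
  unfold jap; rw [Real.sqrt_eq_rpow]

lemma continuous_jap : Continuous jap := by
  have : jap = fun x => Real.sqrt (1 + x ^ 2) := funext jap_eq_sqrt
  rw [this]; fun_prop

lemma jap_le (x : ℝ) : jap x ≤ 1 + |x| := by
  rw [jap_eq_sqrt]
  apply Real.sqrt_le_iff.2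
  constructor
  · positivity
  · nlinarith [abs_nonneg x, sq_abs x]

lemma abs_le_jap (x : ℝ) : |x| ≤ jap x := by
  rw [jap_eq_sqrt]
  apply Real.le_sqrt_of_sq_le
  rw [sq_abs]; linarith

lemma jap_le_two (x : ℝ) (hx : 1 ≤ |x|) : jap x ≤ 2 * |x| := by
  have := jap_le x; linarith

/-- Symbol estimates of order `m` for derivatives up to order `N`. -/
def SymB (N : ℕ) (m : ℝ) (f : ℝ → ℝ) : Prop :=
  ContDiff ℝ ∞ f ∧ ∀ n ≤ N, ∃ C : ℝ, ∀ x, |iteratedDeriv n f x| ≤ C * jap x ^ (m - n)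

lemma SymB.mul {N : ℕ} {a b : ℝ} {f g : ℝ → ℝ} (hf : SymB N a f) (hg : SymB N b g) :
    SymB N (a + b) (fun x => f x * g x) := by
  refine ⟨hf.1.mul hg.1, fun n hn => ?_⟩
  choose! A hA using hf.2
  choose! B hB using hg.2
  refine ⟨∑ i ∈ Finset.range (n + 1), (n.choose i : ℝ) * A i * B (n - i), fun x => ?_⟩
  have hfx : ContDiffAt ℝ n f x := (hf.1.of_le (by exact_mod_cast le_top)).contDiffAt
  have hgx : ContDiffAt ℝ n g x := (hg.1.of_le (by exact_mod_cast le_top)).contDiffAt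
  rw [iteratedDeriv_fun_mul hfx hgx, Finset.sum_mul]
  refine (Finset.abs_sum_le_sum_abs _ _).trans (Finset.sum_le_sum fun i hi => ?_)
  have hi' : i ≤ n := Nat.lt_succ_iff.1 (Finset.mem_range.1 hi)
  have h1 := hA i (hi'.trans hn) x
  have h2 := hB (n - i) ((Nat.sub_le _ _).trans hn) x
  have e : jap x ^ (a + b - n) = jap x ^ (a - i) * jap x ^ (b - (n - i : ℕ)) := by
    rw [← Real.rpow_add (jap_pos x)]
    congr 1
    push_cast [hi']; ring
  rw [abs_mul, abs_mul, Nat.abs_cast, e]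
  calc (n.choose i : ℝ) * |iteratedDeriv i f x| * |iteratedDeriv (n - i) g x|
      = (n.choose i : ℝ) * (|iteratedDeriv i f x| * |iteratedDeriv (n - i) g x|) := by ring
    _ ≤ (n.choose i : ℝ) * ((A i * jap x ^ (a - i)) * (B (n - i) * jap x ^ (b - (n - i : ℕ)))) := by
        apply mul_le_mul_of_nonneg_left _ (Nat.cast_nonneg _)
        exact mul_le_mul h1 h2 (abs_nonneg _) ((abs_nonneg _).trans h1)
    _ = _ := by ring

lemma SymB.const_mul {N : ℕ} {a : ℝ} {f : ℝ → ℝ} (c : ℝ) (hf : SymB N a f) :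
    SymB N a (fun x => c * f x) := by
  refine ⟨contDiff_const.mul hf.1, fun n hn => ?_⟩
  obtain ⟨C, hC⟩ := hf.2 n hn
  refine ⟨|c| * C, fun x => ?_⟩
  rw [iteratedDeriv_const_mul_field, abs_mul, mul_assoc]
  exact mul_le_mul_of_nonneg_left (hC x) (abs_nonneg _)

lemma SymB.succ {N : ℕ} {a : ℝ} {f : ℝ → ℝ} (hf : ContDiff ℝ ∞ f)
    (h0 : ∃ C : ℝ, ∀ x, |f x| ≤ C * jap x ^ a) (h : SymB N (a - 1) (deriv f)) :
    SymB (N + 1) a f := by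
  refine ⟨hf, fun n hn => ?_⟩
  cases n with
  | zero => simpa using h0
  | succ k =>
    obtain ⟨C, hC⟩ := h.2 k (by omega)
    refine ⟨C, fun x => ?_⟩
    rw [iteratedDeriv_succ']
    convert hC x using 3
    push_cast; ring

lemma SymB.zero {a : ℝ} {f : ℝ → ℝ} (hf : ContDiff ℝ ∞ f)
    (h0 : ∃ C : ℝ, ∀ x, |f x| ≤ C * jap x ^ a) : SymB 0 a f := by
  refine ⟨hf, fun n hn => ?_⟩
  obtain rfl : n = 0 := by omega
  simpa using h0

lemma SymB.deriv {N : ℕ} {a : ℝ} {f : ℝ → ℝ} (h : SymB (N + 1) a f) :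
    SymB N (a - 1) (deriv f) := by
  refine ⟨(contDiff_infty_iff_deriv.1 h.1).2, fun n hn => ?_⟩
  obtain ⟨C, hC⟩ := h.2 (n + 1) (by omega)
  refine ⟨C, fun x => ?_⟩
  rw [← iteratedDeriv_succ']
  convert hC x using 3
  push_cast; ring

/-! ### The hyperbolic tangent -/

lemma contDiff_tanh' {n : ℕ∞ω} : ContDiff ℝ n Real.tanh := by
  have : Real.tanh = fun x => Real.sinh x / Real.cosh x :=
    funext Real.tanh_eq_sinh_div_cosh
  rw [this]
  exact Real.contDiff_sinh.div Real.contDiff_cosh fun x => (Real.cosh_pos x).ne'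

/-- `sech²`. -/
def sech2 (x : ℝ) : ℝ := 1 - Real.tanh x ^ 2

lemma sech2_eq (x : ℝ) : sech2 x = 1 / Real.cosh x ^ 2 := by
  unfold sech2
  have := (Real.cosh_pos x).ne'
  rw [Real.tanh_eq_sinh_div_cosh]
  field_simp
  linarith [Real.cosh_sq x]

lemma hasDerivAt_tanh' (x : ℝ) : HasDerivAt Real.tanh (sech2 x) x := by
  have : Real.tanh = fun x => Real.sinh x / Real.cosh x :=
    funext Real.tanh_eq_sinh_div_cosh
  rw [this]
  have h := (Real.hasDerivAt_sinh x).div (Real.hasDerivAt_cosh x) (Real.cosh_pos x).ne'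
  have e : sech2 x = (Real.cosh x * Real.cosh x - Real.sinh x * Real.sinh x) /
      Real.cosh x ^ 2 := by
    rw [sech2_eq]
    congr 1
    linarith [Real.cosh_sq x]
  rw [e]
  exact h

lemma deriv_tanh' : deriv Real.tanh = sech2 := funext fun x => (hasDerivAt_tanh' x).deriv

lemma contDiff_sech2 {n : ℕ∞ω} : ContDiff ℝ n sech2 :=
  contDiff_const.sub (contDiff_tanh'.pow 2)

lemma deriv_sech2 : deriv sech2 = fun x => -2 * (Real.tanh x * sech2 x) := by
  funext x
  have := ((hasDerivAt_tanh' x).pow 2).const_sub 1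
  have e : -2 * (Real.tanh x * sech2 x) =
      -(((2 : ℕ) : ℝ) * Real.tanh x ^ (2 - 1) * sech2 x) := by
    norm_num; ring
  rw [e]
  exact this.deriv

lemma abs_tanh_le (x : ℝ) : |Real.tanh x| ≤ 1 := by
  have h : 0 ≤ sech2 x := by rw [sech2_eq]; positivity
  unfold sech2 at h
  rw [← sq_le_one_iff_abs_le_one]; linarith

lemma sech2_decay (m : ℝ) : ∃ C : ℝ, ∀ x, |sech2 x| ≤ C * jap x ^ m := by
  obtain ⟨K, hK⟩ := exists_nat_ge (-m)
  refine ⟨2 * (K.factorial * Real.exp 1), fun x => ?_⟩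
  have hj := jap_pos x
  have h1 : jap x ^ (-m) ≤ (1 + |x|) ^ K := by
    calc jap x ^ (-m) ≤ jap x ^ (K : ℝ) := Real.rpow_le_rpow_of_exponent_le (one_le_jap x) hK
      _ = jap x ^ K := Real.rpow_natCast _ _
      _ ≤ _ := pow_le_pow_left₀ hj.le (jap_le x) K
  have h2 : (1 + |x|) ^ K ≤ K.factorial * Real.exp (1 + |x|) := by
    have := Real.pow_div_factorial_le_exp (1 + |x|) (by positivity) K
    rw [div_le_iff₀ (by positivity)] at this
    linarith
  have h3 : Real.exp |x| ≤ 2 * Real.cosh x := by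
    rw [← Real.cosh_abs x, Real.cosh_eq]
    linarith [Real.exp_pos (-|x|)]
  have h4 : Real.cosh x ≤ Real.cosh x ^ 2 := by nlinarith [Real.one_le_cosh x]
  have h5 : jap x ^ (-m) ≤ 2 * (K.factorial * Real.exp 1) * Real.cosh x ^ 2 := by
    rw [Real.exp_add] at h2
    calc jap x ^ (-m) ≤ K.factorial * (Real.exp 1 * Real.exp |x|) := h1.trans h2
      _ = (K.factorial * Real.exp 1) * Real.exp |x| := by ring
      _ ≤ (K.factorial * Real.exp 1) * (2 * Real.cosh x ^ 2) := by
        apply mul_le_mul_of_nonneg_left _ (by positivity); linarith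
      _ = _ := by ring
  rw [sech2_eq, abs_of_nonneg (by positivity), div_le_iff₀ (by positivity)]
  rw [Real.rpow_neg hj.le] at h5
  have hp : 0 < jap x ^ m := Real.rpow_pos_of_pos hj m
  rw [inv_le_iff_one_le_mul₀ hp] at h5
  linarith

lemma symB_tanh (N : ℕ) : SymB N 0 Real.tanh ∧ ∀ m : ℝ, SymB N m sech2 := by
  have ht : ∃ C : ℝ, ∀ x, |Real.tanh x| ≤ C * jap x ^ (0 : ℝ) :=
    ⟨1, fun x => by simpa using abs_tanh_le x⟩
  induction N with
  | zero => exact ⟨SymB.zero contDiff_tanh' ht, fun m => SymB.zero contDiff_sech2 (sech2_decay m)⟩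
  | succ N ih =>
    refine ⟨SymB.succ contDiff_tanh' ht ?_, fun m =>
      SymB.succ contDiff_sech2 (sech2_decay m) ?_⟩
    · rw [deriv_tanh']; exact ih.2 _
    · rw [deriv_sech2]
      have := (ih.1.mul (ih.2 (m - 1))).const_mul (-2)
      rwa [zero_add] at this

/-! ### The function `tanh x / x` -/

/-- `tanh x / x` extended by `1` at the origin. -/
def Tz (x : ℝ) : ℝ := dslope Real.tanh 0 x

lemma Tz_zero : Tz 0 = 1 := by
  unfold Tz
  rw [dslope_same, deriv_tanh']
  simp [sech2]

lemma mul_Tz (x : ℝ) : x * Tz x = Real.tanh x := by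
  have := sub_smul_dslope Real.tanh 0 x
  simpa [Tz] using this

lemma Tz_of_ne {x : ℝ} (hx : x ≠ 0) : Tz x = Real.tanh x / x := by
  rw [← mul_Tz x]; field_simp

lemma contDiff_Tz : ContDiff ℝ ∞ Tz := by
  rw [contDiff_iff_contDiffAt]
  intro x
  by_cases hx : x = 0
  · subst hx
    have h : AnalyticAt ℝ Real.tanh 0 := (contDiff_tanh' (n := ω)).contDiffAt.analyticAt
    obtain ⟨p, hp⟩ := h
    have : AnalyticAt ℝ Tz 0 := ⟨_, hp.has_fpower_series_dslope_fslope⟩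
    exact this.contDiffAt
  · have h : (fun x => Real.tanh x / x) =ᶠ[nhds x] Tz := by
      filter_upwards [isOpen_ne.mem_nhds hx] with y hy
      exact (Tz_of_ne hy).symm
    exact (contDiff_tanh'.contDiffAt.div contDiffAt_id hx).congr_of_eventuallyEq h.symm

lemma Tz_pos (x : ℝ) : 0 < Tz x := by
  rcases lt_trichotomy x 0 with h | h | h
  · rw [Tz_of_ne h.ne, Real.tanh_eq_sinh_div_cosh]
    exact div_pos_of_neg_of_neg
      (div_neg_of_neg_of_pos (Real.sinh_neg_iff.2 h) (Real.cosh_pos x)) h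
  · rw [h, Tz_zero]; exact one_pos
  · rw [Tz_of_ne h.ne', Real.tanh_eq_sinh_div_cosh]
    exact div_pos (div_pos (Real.sinh_pos_iff.2 h) (Real.cosh_pos x)) h

lemma Tz_neg (x : ℝ) : Tz (-x) = Tz x := by
  by_cases hx : x = 0
  · simp [hx]
  · rw [Tz_of_ne hx, Tz_of_ne (neg_ne_zero.2 hx), Real.tanh_neg, neg_div_neg_eq]

lemma Tz_abs (x : ℝ) : Tz |x| = Tz x := by
  rcases abs_choice x with h | h <;> rw [h]
  exact Tz_neg x

lemma hasDerivAt_iter {f : ℝ → ℝ} (hf : ContDiff ℝ ∞ f) (n : ℕ) (x : ℝ) :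
    HasDerivAt (iteratedDeriv n f) (iteratedDeriv (n + 1) f x) x := by
  rw [iteratedDeriv_succ]
  exact (hf.differentiable_iteratedDeriv n (by exact_mod_cast WithTop.coe_lt_top _)
    x).hasDerivAt

lemma Tz_rec (n : ℕ) : ∀ x, x * iteratedDeriv (n + 1) Tz x + (n + 1) * iteratedDeriv n Tz x =
    iteratedDeriv (n + 1) Real.tanh x := by
  induction n with
  | zero =>
    intro x
    have h := (hasDerivAt_id x).mul (hasDerivAt_iter contDiff_Tz 0 x)
    have h2 := hasDerivAt_iter (f := Real.tanh) contDiff_tanh' 0 x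
    have e : iteratedDeriv 0 Real.tanh = (id * iteratedDeriv 0 Tz) := by
      funext y; simp [mul_Tz]
    rw [e] at h2
    have := h.unique h2
    simp only [id] at this
    rw [← this]; simp; ring
  | succ n ih =>
    intro x
    have h := ((hasDerivAt_id x).mul (hasDerivAt_iter contDiff_Tz (n + 1) x)).add
      ((hasDerivAt_iter contDiff_Tz n x).const_mul ((n : ℝ) + 1))
    have h2 := hasDerivAt_iter (f := Real.tanh) contDiff_tanh' (n + 1) x
    have e : iteratedDeriv (n + 1) Real.tanh = (id * iteratedDeriv (n + 1) Tz) +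
        fun y => ((n : ℝ) + 1) * iteratedDeriv n Tz y := by
      funext y; simp [← ih y]
    rw [e] at h2
    have := h.unique h2
    simp only [id] at this
    rw [← this]; push_cast; ring

/-- Gluing a bound on a compact set with a bound at infinity. -/
lemma glue {f : ℝ → ℝ} (hf : Continuous f) {a : ℝ} {D : ℝ}
    (h : ∀ x, |x * f x| ≤ D * jap x ^ (a + 1)) : ∃ C : ℝ, ∀ x, |f x| ≤ C * jap x ^ a := by
  have hc : Continuous fun x => f x * jap x ^ (-a) :=
    hf.mul (continuous_jap.rpow_const fun x => Or.inl (jap_pos x).ne')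
  obtain ⟨M, hM⟩ := (isCompact_Icc (a := (-1 : ℝ)) (b := 1)).exists_bound_of_continuousOn
    hc.continuousOn
  refine ⟨max M (2 * D), fun x => ?_⟩
  have hp : 0 < jap x ^ a := Real.rpow_pos_of_pos (jap_pos x) a
  by_cases hx : |x| ≤ 1
  · have h1 := hM x (abs_le.1 hx)
    rw [Real.norm_eq_abs, abs_mul, Real.rpow_neg (jap_pos x).le,
      abs_of_pos (inv_pos.2 hp), ← div_eq_mul_inv, div_le_iff₀ hp] at h1
    exact h1.trans (mul_le_mul_of_nonneg_right (le_max_left _ _) hp.le)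
  · push Not at hx
    have h1 := h x
    rw [abs_mul, Real.rpow_add (jap_pos x), Real.rpow_one] at h1
    have h2 := jap_le_two x hx.le
    have hD : 0 ≤ D * jap x ^ a := by
      have : 0 ≤ D * (jap x ^ a * jap x) := (by positivity : (0:ℝ) ≤ |x| * |f x|).trans h1
      rw [← mul_assoc] at this
      exact nonneg_of_mul_nonneg_left this (jap_pos x)
    have h3 : |x| * |f x| ≤ |x| * (2 * D * jap x ^ a) := by
      calc |x| * |f x| ≤ D * jap x ^ a * jap x := by linarith
        _ ≤ D * jap x ^ a * (2 * |x|) := mul_le_mul_of_nonneg_left h2 hD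
        _ = _ := by ring
    have h4 := le_of_mul_le_mul_left h3 (by linarith)
    exact h4.trans (mul_le_mul_of_nonneg_right (le_max_right _ _) hp.le)

lemma Tz_bound (n : ℕ) : ∃ C : ℝ, ∀ x, |iteratedDeriv n Tz x| ≤ C * jap x ^ (-1 - n : ℝ) := by
  have hcont (n : ℕ) : Continuous (iteratedDeriv n Tz) :=
    contDiff_Tz.continuous_iteratedDeriv n (by exact_mod_cast le_top)
  induction n with
  | zero =>
    refine glue (hcont 0) (D := 1) fun x => ?_
    simpa [mul_Tz] using abs_tanh_le x
  | succ n ih =>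
    obtain ⟨A, hA⟩ := ih
    obtain ⟨B, hB⟩ := (symB_tanh (n + 1)).1.2 (n + 1) le_rfl
    refine glue (hcont (n + 1)) (D := B + (n + 1) * A) fun x => ?_
    have e1 : (-1 - ((n + 1 : ℕ) : ℝ) + 1) = -1 - n := by push_cast; ring
    have e2 : (0 - ((n + 1 : ℕ) : ℝ)) = -1 - n := by push_cast; ring
    have h1 := hA x
    have h2 := hB x
    rw [e2] at h2
    rw [e1]
    have e : x * iteratedDeriv (n + 1) Tz x =
      iteratedDeriv (n + 1) Real.tanh x - (n + 1) * iteratedDeriv n Tz x := by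
      rw [← Tz_rec n x]; ring
    rw [e]
    calc _ ≤ |iteratedDeriv (n + 1) Real.tanh x| + |((n : ℝ) + 1) * iteratedDeriv n Tz x| :=
          abs_sub _ _
      _ = |iteratedDeriv (n + 1) Real.tanh x| + ((n : ℝ) + 1) * |iteratedDeriv n Tz x| := by
          rw [abs_mul, abs_of_nonneg (by positivity : (0 : ℝ) ≤ (n : ℝ) + 1)]
      _ ≤ B * jap x ^ (-1 - n : ℝ) + ((n : ℝ) + 1) * (A * jap x ^ (-1 - n : ℝ)) :=
          add_le_add h2 (mul_le_mul_of_nonneg_left h1 (by positivity))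
      _ = _ := by ring

lemma symB_Tz (N : ℕ) : SymB N (-1) Tz := ⟨contDiff_Tz, fun n _ => Tz_bound n⟩

lemma Tz_lower : ∃ c : ℝ, 0 < c ∧ ∀ x, c ≤ Tz x * jap x := by
  obtain ⟨C, hC⟩ : ∃ C : ℝ, ∀ x, |(Tz x)⁻¹| ≤ C * jap x ^ (1 : ℝ) := by
    have hc : Continuous fun x => (Tz x)⁻¹ :=
      contDiff_Tz.continuous.inv₀ fun x => (Tz_pos x).ne'
    obtain ⟨M, hM⟩ := (isCompact_Icc (a := (-1 : ℝ)) (b := 1)).exists_bound_of_continuousOn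
      hc.continuousOn
    have ht : 0 < Real.tanh 1 := by
      rw [← mul_Tz 1]; simpa using Tz_pos 1
    refine ⟨max M (Real.tanh 1)⁻¹, fun x => ?_⟩
    rw [Real.rpow_one]
    have hj := jap_pos x
    by_cases hx : |x| ≤ 1
    · have h1 := hM x (abs_le.1 hx)
      rw [Real.norm_eq_abs] at h1
      have h2 : |(Tz x)⁻¹| ≤ max M (Real.tanh 1)⁻¹ := h1.trans (le_max_left _ _)
      nlinarith [one_le_jap x, abs_nonneg (Tz x)⁻¹]
    · push Not at hx
      have hmono : Monotone Real.tanh := by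
        apply monotone_of_deriv_nonneg (fun x => (hasDerivAt_tanh' x).differentiableAt)
        intro x
        rw [deriv_tanh', sech2_eq]; positivity
      have h1 : Real.tanh 1 ≤ Real.tanh |x| := hmono hx.le
      have hx0 : 0 < |x| := by linarith
      rw [abs_of_pos (inv_pos.2 (Tz_pos x)), ← Tz_abs, Tz_of_ne hx0.ne', inv_div,
        div_eq_inv_mul]
      have h2 : (Real.tanh |x|)⁻¹ ≤ (Real.tanh 1)⁻¹ := inv_anti₀ ht h1
      exact mul_le_mul (h2.trans (le_max_right _ _)) (abs_le_jap x) hx0.le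
        ((inv_pos.2 ht).le.trans (le_max_right _ _))
  have hCpos : 0 < C := by
    have h := hC 0
    rw [Tz_zero] at h
    by_contra hcon
    push Not at hcon
    have : C * jap 0 ^ (1 : ℝ) ≤ 0 :=
      mul_nonpos_of_nonpos_of_nonneg hcon (Real.rpow_nonneg (jap_pos 0).le _)
    norm_num at h this
    linarith
  refine ⟨C⁻¹, inv_pos.2 hCpos, fun x => ?_⟩
  have h := hC x
  rw [Real.rpow_one, abs_of_pos (inv_pos.2 (Tz_pos x)), inv_le_iff_one_le_mul₀ (Tz_pos x)] at h
  rw [inv_le_iff_one_le_mul₀ hCpos]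
  linarith

lemma Tz_rpow_bound (p : ℝ) : ∃ C : ℝ, ∀ x, |Tz x ^ p| ≤ C * jap x ^ (-p) := by
  obtain ⟨c, hc, hl⟩ := Tz_lower
  obtain ⟨D, hD⟩ := Tz_bound 0
  refine ⟨c ^ p + D ^ p, fun x => ?_⟩
  have hj := jap_pos x
  have hT := Tz_pos x
  have hu : Tz x * jap x ≤ D := by
    have := hD x
    simp only [iteratedDeriv_zero, Nat.cast_zero, sub_zero, abs_of_pos hT,
      Real.rpow_neg_one] at this
    rwa [← div_eq_mul_inv, le_div_iff₀ hj] at this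
  have hq : 0 < Tz x * jap x := mul_pos hT hj
  have hDp : 0 < D := hq.trans_le hu
  have key : (Tz x * jap x) ^ p ≤ c ^ p + D ^ p := by
    rcases le_total 0 p with hp | hp
    · have := Real.rpow_le_rpow hq.le hu hp
      linarith [Real.rpow_pos_of_pos hc p]
    · have := Real.rpow_le_rpow_of_nonpos hc (hl x) hp
      linarith [Real.rpow_pos_of_pos hDp p]
  rw [Real.mul_rpow hT.le hj.le] at key
  rw [abs_of_pos (Real.rpow_pos_of_pos hT p), Real.rpow_neg hj.le, ← div_eq_mul_inv,
    le_div_iff₀ (Real.rpow_pos_of_pos hj p)]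
  exact key

lemma contDiff_Tz_rpow (p : ℝ) : ContDiff ℝ ∞ fun x => Tz x ^ p :=
  contDiff_Tz.rpow_const_of_ne fun x => (Tz_pos x).ne'

lemma symB_Tz_rpow (N : ℕ) : ∀ p : ℝ, SymB N (-p) (fun x => Tz x ^ p) := by
  induction N with
  | zero => exact fun p => SymB.zero (contDiff_Tz_rpow p) (Tz_rpow_bound p)
  | succ N ih =>
    intro p
    refine SymB.succ (contDiff_Tz_rpow p) (Tz_rpow_bound p) ?_
    have h := ((symB_Tz (N + 1)).deriv.mul (ih (p - 1))).const_mul p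
    convert h using 1
    · ring
    · funext x
      have hd : HasDerivAt Tz (deriv Tz x) x :=
        ((contDiff_infty_iff_deriv.1 contDiff_Tz).1 x).hasDerivAt
      rw [(hd.rpow_const (p := p) (Or.inl (Tz_pos x).ne')).deriv]
      ring

lemma hsymb_eq {μ : ℝ} (hμ : 0 < μ) :
    hsymb μ = fun ξ => (fun x => Tz x ^ (-(1 : ℝ) / 2)) (Real.sqrt μ * ξ) := by
  funext ξ
  have hs : 0 < Real.sqrt μ := Real.sqrt_pos.2 hμ
  simp only [hsymb]
  congr 1
  unfold Tsymb
  split_ifs with h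
  · simp [h, Tz_zero]
  · have : Real.sqrt μ * |ξ| = |Real.sqrt μ * ξ| := by rw [abs_mul, abs_of_pos hs]
    rw [this, ← Tz_of_ne (abs_ne_zero.2 (mul_ne_zero hs.ne' h)), Tz_abs]

/-- For `μ ∈ (0,1]`, the function `h_μ = T_μ^{-1/2}` is smooth on `ℝ`, and for
every `n ∈ ℕ` there is a constant `C_n`, independent of `μ`, with
`|h_μ^{(n)}(ξ)| ≤ C_n μ^{n/2} ⟨√μ ξ⟩^{1/2 - n}` for all `ξ ∈ ℝ`. -/
theorem hsymb_smooth_and_deriv_bounds :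
    (∀ μ : ℝ, 0 < μ → μ ≤ 1 → ContDiff ℝ (⊤ : ℕ∞) (hsymb μ)) ∧
      ∀ n : ℕ, ∃ C : ℝ, 0 < C ∧
        ∀ μ : ℝ, 0 < μ → μ ≤ 1 → ∀ ξ : ℝ,
          |iteratedDeriv n (hsymb μ) ξ|
            ≤ C * μ ^ ((n : ℝ) / 2) * jap (Real.sqrt μ * ξ) ^ ((1 : ℝ) / 2 - n) := by
  refine ⟨fun μ hμ _ => ?_, fun n => ?_⟩
  · rw [hsymb_eq hμ]
    exact (contDiff_Tz_rpow _).comp (contDiff_const.mul contDiff_id)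
  · obtain ⟨C, hC⟩ := (symB_Tz_rpow n (-(1 : ℝ) / 2)).2 n le_rfl
    refine ⟨max C 1, lt_max_of_lt_right one_pos, fun μ hμ _ ξ => ?_⟩
    have hcd : ContDiff ℝ n fun x => Tz x ^ (-(1 : ℝ) / 2) :=
      (contDiff_Tz_rpow _).of_le (by exact_mod_cast le_top)
    have hs : 0 < Real.sqrt μ := Real.sqrt_pos.2 hμ
    have e : Real.sqrt μ ^ n = μ ^ ((n : ℝ) / 2) := by
      rw [Real.sqrt_eq_rpow, ← Real.rpow_natCast, ← Real.rpow_mul hμ.le]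
      congr 1; ring
    have h := hC (Real.sqrt μ * ξ)
    have e2 : (-(-(1 : ℝ) / 2) - n) = 1 / 2 - n := by ring
    rw [e2] at h
    rw [hsymb_eq hμ, iteratedDeriv_comp_const_mul hcd, abs_mul, abs_of_pos (pow_pos hs n), e]
    have hp : 0 < jap (Real.sqrt μ * ξ) ^ ((1 : ℝ) / 2 - n) := Real.rpow_pos_of_pos (jap_pos _) _
    have hm : 0 < μ ^ ((n : ℝ) / 2) := Real.rpow_pos_of_pos hμ _
    calc _ ≤ μ ^ ((n : ℝ) / 2) * (max C 1 * jap (Real.sqrt μ * ξ) ^ ((1 : ℝ) / 2 - n)) := by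
          apply mul_le_mul_of_nonneg_left _ hm.le
          exact h.trans (mul_le_mul_of_nonneg_right (le_max_left _ _) hp.le)
      _ = _ := by ring
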